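/- Let b(x,s) ∈ K[x,s] be nonzero and f ∈ K[x]. There exists Q ∈ D_X[s] satisfying Q f^{s+1} = b(x,s) f^s in N_f if and only if b(x,σ) ∈ I_f + V^1 D_Y, where σ = -∂_t t. In particular, the global Bernstein–Sato polynomial b_f generates the ideal (in_{(-w,w)} I_f) ∩ K[σ], where w = (0,...,0,1) and in_{(-w,w)} denotes the initial ideal with respect to the weight vector (-w,w). -/

import Mathlib

open Polynomial

/-- abstract normal form modulo the left ideal. -/
theorem BS_normal {K A R ι : Type*} [Field K] [Ring A] [Algebra K A] [CommRing R]
    (m : R →+* A) (pd : ι → R → R) (f : R) (t dt : A) (x dx : ι → A) (X : ι → R)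
    (hX : ∀ i, x i = m (X i))
    (h1 : dt * t = t * dt + 1) (h2 : ∀ r, t * m r = m r * t) (h3 : ∀ r, dt * m r = m r * dt)
    (h5 : ∀ i, dx i * dt = dt * dx i)
    (h6 : ∀ i r, dx i * m r = m r * dx i + m (pd i r))
    (hmB : ∀ r, m r ∈ Algebra.adjoin K ({P | ∃ i, P = x i ∨ P = dx i} ∪ {t, dt}))
    (P : A) (hP : P ∈ Algebra.adjoin K ({P | ∃ i, P = x i ∨ P = dx i} ∪ {t, dt})) :
    P ∈ Submodule.span K {w : A | ∃ P ∈ Algebra.adjoin K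
            ({P | ∃ i, P = x i ∨ P = dx i} ∪ {t, dt}),
          w = P * (t - m f) ∨ ∃ i, w = P * (dx i + m (pd i f) * dt)}
        ⊔ Submodule.span K {w : A | ∃ g k, w = m g * dt ^ k} := by
  set B := Algebra.adjoin K ({P | ∃ i, P = x i ∨ P = dx i} ∪ {t, dt}) with hB
  set I := Submodule.span K {w : A | ∃ P ∈ B,
          w = P * (t - m f) ∨ ∃ i, w = P * (dx i + m (pd i f) * dt)} with hI
  set N := Submodule.span K {w : A | ∃ g k, w = m g * dt ^ k} with hN
  have hdtB : dt ∈ B := Algebra.subset_adjoin (Or.inr (by simp))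
  have hIl : ∀ Q ∈ B, ∀ w ∈ I, Q * w ∈ I := by
    intro Q hQ w hw
    induction hw using Submodule.span_induction with
    | mem w hw =>
      obtain ⟨P, hP, h⟩ := hw
      apply Submodule.subset_span
      refine ⟨Q * P, B.mul_mem hQ hP, ?_⟩
      rcases h with h | ⟨i, h⟩
      · left; rw [h, mul_assoc]
      · right; exact ⟨i, by rw [h, mul_assoc]⟩
    | zero => simp
    | add a b _ _ ha hb => rw [mul_add]; exact I.add_mem ha hb
    | smul c a _ ha => rw [mul_smul_comm]; exact I.smul_mem c ha
  have hNm : ∀ g k, m g * dt ^ k ∈ I ⊔ N := fun g k =>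
    Submodule.mem_sup_right (Submodule.subset_span ⟨g, k, rfl⟩)
  have hmk : ∀ k r, dt ^ k * m r = m r * dt ^ k := fun k r =>
    ((show Commute dt (m r) from h3 r).pow_left k).eq
  have hdxk : ∀ i k, dx i * dt ^ k = dt ^ k * dx i := fun i k =>
    ((show Commute (dx i) dt from h5 i).pow_right k).eq
  have htk : ∀ k : ℕ, t * dt ^ k = dt ^ k * t - (k : A) * dt ^ (k - 1) := by
    intro k
    induction k with
    | zero => simp
    | succ k ih =>
      have : t * dt ^ (k+1) = (t * dt ^ k) * dt := by rw [pow_succ, mul_assoc]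
      rw [this, ih]
      have e : t * dt = dt * t - 1 := by rw [h1]; simp
      rw [sub_mul, mul_assoc, e, mul_sub, ← mul_assoc, ← pow_succ, mul_assoc (k : A)]
      rcases k with _ | k
      · simp
      · simp only [Nat.add_sub_cancel, ← pow_succ]
        push_cast
        noncomm_ring
  -- elements m g * dt^k * generator in I
  have hdk : ∀ k, dt ^ k ∈ B := fun k => B.pow_mem hdtB k
  have main : ∀ Q ∈ B, ∀ w ∈ I ⊔ N, Q * w ∈ I ⊔ N := by
    -- reduce to generators
    intro Q hQ
    have hQ' := hQ
    rw [hB] at hQ'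
    induction hQ' using Algebra.adjoin_induction with
    | mem Q hQg =>
      intro w hw
      obtain ⟨a, ha, b, hb, rfl⟩ := Submodule.mem_sup.1 hw
      rw [mul_add]
      refine add_mem (Submodule.mem_sup_left (hIl Q hQ a ha)) ?_
      clear hw
      induction hb using Submodule.span_induction with
      | zero => simp
      | add a b _ _ ha hb => rw [mul_add]; exact add_mem ha hb
      | smul c a _ ha => rw [mul_smul_comm]; exact Submodule.smul_mem _ c ha
      | mem w hw =>
        obtain ⟨g, k, rfl⟩ := hw
        have hgk : m g * dt ^ k ∈ B := B.mul_mem (hmB g) (hdk k)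
        rcases hQg with ⟨i, rfl | rfl⟩ | hQg
        · rw [hX, ← mul_assoc, ← map_mul]; exact hNm _ _
        · have e : dx i * (m g * dt ^ k) = m g * dt ^ k * (dx i + m (pd i f) * dt)
              - m (g * pd i f) * dt ^ (k+1) + m (pd i g) * dt ^ k := by
            rw [← mul_assoc, h6, add_mul, mul_assoc, hdxk, mul_add, ← mul_assoc, map_mul,
              mul_assoc (m g) (dt ^ k) (m (pd i f) * dt), ← mul_assoc (dt ^ k), hmk, pow_succ]
            noncomm_ring
          rw [e]
          exact add_mem (sub_mem (Submodule.mem_sup_left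
            (Submodule.subset_span ⟨_, hgk, Or.inr ⟨i, rfl⟩⟩)) (hNm _ _)) (hNm _ _)
        · rcases hQg with rfl | hQg
          · have e : Q * (m g * dt ^ k) = m g * dt ^ k * (Q - m f)
              + m (g * f) * dt ^ k - m (g * (k : R)) * dt ^ (k - 1) := by
              rw [← mul_assoc, h2, mul_assoc, htk, mul_sub (m g * dt ^ k), mul_assoc (m g) (dt ^ k) (m f), hmk,
                map_mul, map_mul, map_natCast]
              noncomm_ring
            rw [e]
            exact sub_mem (add_mem (Submodule.mem_sup_left
              (Submodule.subset_span ⟨_, hgk, Or.inl rfl⟩)) (hNm _ _)) (hNm _ _)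
          · rw [Set.mem_singleton_iff.1 hQg, ← mul_assoc, h3, mul_assoc, ← pow_succ']
            exact hNm _ _
    | algebraMap c =>
      intro w hw
      rw [← Algebra.smul_def]; exact Submodule.smul_mem _ c hw
    | add a b ha hb iha ihb =>
      intro w hw; rw [add_mul]; exact add_mem (iha ha w hw) (ihb hb w hw)
    | mul a b ha hb iha ihb =>
      intro w hw; rw [mul_assoc]; exact iha ha _ (ihb hb w hw)
  have := main P hP 1 (by simpa using hNm 1 0)
  simpa using this

theorem BS_V1 {K A ι : Type*} [Field K] [Ring A] [Algebra K A]
    (t dt : A) (x dx : ι → A)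
    (h1 : dt * t = t * dt + 1) (h2 : ∀ i, t * x i = x i * t) (h3 : ∀ i, dt * x i = x i * dt)
    (h4 : ∀ i, t * dx i = dx i * t) (h5 : ∀ i, dt * dx i = dx i * dt)
    (Q : A) (hQ : Q ∈ Algebra.adjoin K ({P | ∃ i, P = x i ∨ P = dx i} ∪ {-(dt * t)})) :
    Q * t ∈ Submodule.span K
        {w : A | ∃ P ∈ Algebra.adjoin K {P | ∃ i, P = x i ∨ P = dx i},
          ∃ μ ν : ℕ, (μ : ℤ) - (ν : ℤ) ≥ 1 ∧ w = P * t ^ μ * dt ^ ν} := by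
  set B := Algebra.adjoin K {P | ∃ i, P = x i ∨ P = dx i} with hB
  set W := Submodule.span K {w : A | ∃ P ∈ B,
          ∃ μ ν : ℕ, (μ : ℤ) - (ν : ℤ) ≥ 1 ∧ w = P * t ^ μ * dt ^ ν} with hW
  have hc : ∀ P ∈ B, t * P = P * t ∧ dt * P = P * dt := by
    intro P hP
    rw [hB] at hP
    induction hP using Algebra.adjoin_induction with
    | mem P h => rcases h with ⟨i, rfl | rfl⟩ <;> simp [h2, h3, h4, h5]
    | algebraMap c => exact ⟨(Algebra.commutes c t).symm, (Algebra.commutes c dt).symm⟩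
    | add a b _ _ ha hb => simp [mul_add, add_mul, ha.1, ha.2, hb.1, hb.2]
    | mul a b _ _ ha hb =>
      constructor
      · rw [← mul_assoc, ha.1, mul_assoc, hb.1, mul_assoc]
      · rw [← mul_assoc, ha.2, mul_assoc, hb.2, mul_assoc]
  have hdk : ∀ k : ℕ, dt * t ^ (k+1) = t ^ (k+1) * dt + ((k + 1 : ℕ) : A) * t ^ k := by
    intro k
    induction k with
    | zero => simp [h1]
    | succ k ih =>
      rw [pow_succ t (k+1), ← mul_assoc, ih, add_mul, mul_assoc, h1, mul_assoc _ (t ^ k), ← pow_succ]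
      push_cast
      noncomm_ring
  have main : ∀ w ∈ W, Q * w ∈ W := by
    induction hQ using Algebra.adjoin_induction with
    | algebraMap c =>
      intro w hw
      rw [← Algebra.smul_def]; exact Submodule.smul_mem _ c hw
    | add a b ha hb iha ihb =>
      intro w hw; rw [add_mul]; exact add_mem (iha w hw) (ihb w hw)
    | mul a b ha hb iha ihb =>
      intro w hw; rw [mul_assoc]; exact iha _ (ihb w hw)
    | mem Q hQ =>
      intro w hw
      induction hw using Submodule.span_induction with
      | zero => simp
      | add a b _ _ ha hb => rw [mul_add]; exact add_mem ha hb
      | smul c a _ ha => rw [mul_smul_comm]; exact Submodule.smul_mem _ c ha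
      | mem w hw =>
        obtain ⟨P, hP, μ, ν, hμ, rfl⟩ := hw
        rcases hQ with hQ | hQ
        · apply Submodule.subset_span
          exact ⟨Q * P, B.mul_mem (Algebra.subset_adjoin hQ) hP, μ, ν, hμ, by
            simp only [mul_assoc]⟩
        · rw [Set.mem_singleton_iff.1 hQ]
          have e : -(dt * t) * (P * t ^ μ * dt ^ ν)
              = -(P * t ^ (μ + 1) * dt ^ (ν + 1)) - ((μ + 1 : ℕ) : K) • (P * t ^ μ * dt ^ ν) := by
            have : dt * t * (P * t ^ μ * dt ^ ν) = P * (dt * t ^ (μ+1)) * dt ^ ν := by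
              rw [pow_succ']
              calc _ = dt * (t * P) * t ^ μ * dt ^ ν := by simp only [mul_assoc]
                _ = (dt * P) * t * t ^ μ * dt ^ ν := by rw [(hc P hP).1]; simp only [mul_assoc]
                _ = _ := by rw [(hc P hP).2]; simp only [mul_assoc]
            rw [neg_mul, this, hdk, Algebra.smul_def, map_natCast, pow_succ' dt,
              mul_add, (Nat.cast_commute (μ+1) _).eq, add_mul,
              (Nat.cast_commute (μ+1) (P * t ^ μ * dt ^ ν)).eq]
            simp only [mul_assoc, (Nat.cast_commute (μ+1) (dt ^ ν)).eq]
            abel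
          rw [e]
          refine sub_mem (neg_mem (Submodule.subset_span ⟨P, hP, _, _, ?_, rfl⟩))
            (Submodule.smul_mem _ _ (Submodule.subset_span ⟨P, hP, _, _, hμ, rfl⟩))
          push_cast; linarith
  apply main
  apply Submodule.subset_span
  exact ⟨1, B.one_mem, 1, 0, by simp, by simp⟩

theorem BS_dx {K S : Type*} [Field K] [CommRing S] [Algebra K S] (D : Derivation K S S)
    (dx : Module.End K (Polynomial S)) (u : S)
    (hdx : ∀ (a : S) (m : ℕ), dx (C a * X ^ m) = C (D a) * X ^ m + X * C u * (C a * X ^ m)) :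
    (∀ r h, dx (C r * h) = C r * dx h + C (D r) * h) ∧ (∀ h, dx (X * h) = X * dx h) ∧
    (∀ e, D e = 0 → ∀ h : S[X], dx (aeval (X + C e : S[X]) h)
      = aeval (X + C e : S[X]) (dx h) - C (u * e) * aeval (X + C e : S[X]) h) := by
  have A1 : ∀ r h, dx (C r * h) = C r * dx h + C (D r) * h := by
    intro r h
    induction h using Polynomial.induction_on' with
    | add p q hp hq => simp only [mul_add, map_add, hp, hq]; ring
    | monomial m a =>
      rw [← C_mul_X_pow_eq_monomial, ← mul_assoc, ← C_mul, hdx, hdx]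
      simp only [Derivation.leibniz, smul_eq_mul, C_mul, C_add]
      ring
  have A2 : ∀ h, dx (X * h) = X * dx h := by
    intro h
    induction h using Polynomial.induction_on' with
    | add p q hp hq => simp only [mul_add, map_add, hp, hq]
    | monomial m a =>
      rw [← C_mul_X_pow_eq_monomial, show (X : S[X]) * (C a * X ^ m) = C a * X ^ (m+1) by ring,
        hdx, hdx]
      ring
  refine ⟨A1, A2, ?_⟩
  intro e he h
  induction h using Polynomial.induction_on' with
  | add p q hp hq => simp only [mul_add, map_add, hp, hq]; ring
  | monomial m a =>
    rw [← C_mul_X_pow_eq_monomial]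
    induction m with
    | zero =>
      have h1 : ∀ a, dx (C a) = C (D a) + X * C u * C a := by
        intro a; simpa using hdx a 0
      simp only [pow_zero, mul_one, aeval_C, Polynomial.algebraMap_eq, h1, map_add, map_mul, aeval_X]
      ring
    | succ m ih =>
      rw [show (C a * X ^ (m+1) : S[X]) = X * (C a * X ^ m) by ring, A2]
      generalize C a * X ^ m = q at ih
      simp only [map_mul, aeval_X, add_mul, map_add, A1, A2, he, ih, C_0]
      ring

theorem BSxs (K : Type*) [Field K] [CharZero K] (n : ℕ)
    (f : MvPolynomial (Fin n) K) (hf : f ≠ 0)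
    (S : Type*) [CommRing S] [Algebra (MvPolynomial (Fin n) K) S] [Algebra K S]
    [IsScalarTower K (MvPolynomial (Fin n) K) S]
    [IsLocalization.Away f S]
    (D : Fin n → Derivation K S S)
    (hD : ∀ i (r : MvPolynomial (Fin n) K),
      D i (algebraMap (MvPolynomial (Fin n) K) S r)
        = algebraMap (MvPolynomial (Fin n) K) S (MvPolynomial.pderiv i r))
    (t : Module.End K (Polynomial S))
    (ht : ∀ h : Polynomial S,
      t h = Polynomial.C (algebraMap (MvPolynomial (Fin n) K) S f) *
        (Polynomial.aeval (Polynomial.X + 1) h))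
    (dt : Module.End K (Polynomial S))
    (hdt : ∀ h : Polynomial S,
      dt h = -(Polynomial.X * Polynomial.C (IsLocalization.Away.invSelf (S := S) f) *
        (Polynomial.aeval (Polynomial.X - 1) h)))
    (xOp : Fin n → Module.End K (Polynomial S))
    (hx : ∀ i (h : Polynomial S),
      xOp i h = Polynomial.C (algebraMap (MvPolynomial (Fin n) K) S (MvPolynomial.X i)) * h)
    (dx : Fin n → Module.End K (Polynomial S))
    (hdx : ∀ i (a : S) (m : ℕ),
      dx i (Polynomial.C a * Polynomial.X ^ m)
        = Polynomial.C (D i a) * Polynomial.X ^ m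
          + Polynomial.X *
            Polynomial.C (algebraMap (MvPolynomial (Fin n) K) S (MvPolynomial.pderiv i f) *
              IsLocalization.Away.invSelf (S := S) f) *
            (Polynomial.C a * Polynomial.X ^ m))
    -- multiplication (in End) by a polynomial in K[x], as a ring hom
    (mulX : MvPolynomial (Fin n) K →+* Module.End K (Polynomial S))
    (hmulX : ∀ (r : MvPolynomial (Fin n) K) (h : Polynomial S),
      mulX r h = Polynomial.C (algebraMap (MvPolynomial (Fin n) K) S r) * h)
    (b : Polynomial (MvPolynomial (Fin n) K)) (hb : b ≠ 0) :
    -- ∃ Q ∈ D_X[s], Q f^{s+1} = b(x,s) fˢ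
    (∃ Q ∈ Algebra.adjoin K
        ({P | ∃ i : Fin n, P = xOp i ∨ P = dx i} ∪ {-(dt * t)}),
      Q (Polynomial.C (algebraMap (MvPolynomial (Fin n) K) S f))
        = b.map (algebraMap (MvPolynomial (Fin n) K) S))
    ↔
    -- b(x,σ) ∈ I_f + V¹ D_Y
    (Polynomial.eval₂ mulX (-(dt * t)) b) ∈
      (Submodule.span K
        {w : Module.End K (Polynomial S) | ∃ P ∈ Algebra.adjoin K
            ({P | ∃ i : Fin n, P = xOp i ∨ P = dx i} ∪ {t, dt}),
          w = P * (t - mulX f) ∨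
          ∃ i : Fin n, w = P * (dx i + mulX (MvPolynomial.pderiv i f) * dt)}
      + Submodule.span K
        {w : Module.End K (Polynomial S) | ∃ P ∈ Algebra.adjoin K
            {P | ∃ i : Fin n, P = xOp i ∨ P = dx i},
          ∃ μ ν : ℕ, (μ : ℤ) - (ν : ℤ) ≥ 1 ∧ w = P * t ^ μ * dt ^ ν}) := by
  have hFG : algebraMap (MvPolynomial (Fin n) K) S f * IsLocalization.Away.invSelf (S := S) f = 1 :=
    IsLocalization.Away.mul_invSelf f
  have hinj : Function.Injective (algebraMap (MvPolynomial (Fin n) K) S) :=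
    IsLocalization.injective S (powers_le_nonZeroDivisors_of_noZeroDivisors hf)
  generalize hG : IsLocalization.Away.invSelf (S := S) f = G at *
  generalize hF : algebraMap (MvPolynomial (Fin n) K) S f = F at *
  have hCFG : (C F * C G : S[X]) = 1 := by rw [← C_mul, hFG, C_1]
  have hpm : ∀ h : S[X], aeval (X + 1 : S[X]) (aeval (X - 1 : S[X]) h) = h := by
    intro h
    rw [← Polynomial.comp_eq_aeval, ← Polynomial.comp_eq_aeval, Polynomial.comp_assoc]
    simp
  have hmp : ∀ h : S[X], aeval (X - 1 : S[X]) (aeval (X + 1 : S[X]) h) = h := by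
    intro h
    rw [← Polynomial.comp_eq_aeval, ← Polynomial.comp_eq_aeval, Polynomial.comp_assoc]
    simp
  have hσ : ∀ h, (-(dt * t)) h = X * h := by
    intro h
    simp only [LinearMap.neg_apply, Module.End.mul_apply, ht, hdt, map_mul, aeval_C, hmp,
      Polynomial.algebraMap_eq]
    linear_combination (X * h) * hCFG
  have h1 : dt * t = t * dt + 1 := by
    ext1 h
    have := hσ h
    rw [LinearMap.neg_apply] at this
    rw [← neg_neg ((dt * t) h), this]
    simp only [LinearMap.add_apply, Module.End.mul_apply, Module.End.one_apply, ht, hdt, map_neg,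
      map_mul, aeval_C, hpm, Polynomial.algebraMap_eq, aeval_X]
    linear_combination ((X + 1) * h) * hCFG
  have h2 : ∀ r, t * mulX r = mulX r * t := by
    intro r; ext1 h
    simp only [Module.End.mul_apply, ht, hmulX, map_mul, aeval_C, Polynomial.algebraMap_eq]
    ring
  have h3 : ∀ r, dt * mulX r = mulX r * dt := by
    intro r; ext1 h
    simp only [Module.End.mul_apply, hdt, hmulX, map_mul, aeval_C, Polynomial.algebraMap_eq]
    ring
  have hxm : ∀ i, xOp i = mulX (MvPolynomial.X i) := by
    intro i; ext1 h; rw [hx, hmulX]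
  have h6 : ∀ i r, dx i * mulX r = mulX r * dx i + mulX (MvPolynomial.pderiv i r) := by
    intro i r; ext1 h
    simp only [Module.End.mul_apply, LinearMap.add_apply, hmulX, (BS_dx (D i) (dx i) _ (hdx i)).1, hD]
  have h4 : ∀ i, t * dx i = dx i * t := by
    intro i; ext1 h
    obtain ⟨A1, A2, A3⟩ := BS_dx (D i) (dx i) _ (hdx i)
    have A := A3 1 (by simp) h
    simp only [C_1] at A
    have hDF : D i F = algebraMap _ S (MvPolynomial.pderiv i f) := by rw [← hF, hD]
    simp only [Module.End.mul_apply, ht, A1, A, hDF, mul_one, C_mul]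
    linear_combination (C (algebraMap _ S (MvPolynomial.pderiv i f)) * aeval (X + 1 : S[X]) h) * hCFG
  have h5 : ∀ i, dt * dx i = dx i * dt := by
    intro i; ext1 h
    obtain ⟨A1, A2, A3⟩ := BS_dx (D i) (dx i) _ (hdx i)
    have A := A3 (-1) (by simp) h
    simp only [C_neg, C_1, ← sub_eq_add_neg] at A
    have hDF : D i F = algebraMap _ S (MvPolynomial.pderiv i f) := by rw [← hF, hD]
    have hDG : D i G = - (G * G * algebraMap _ S (MvPolynomial.pderiv i f)) := by
      have := congrArg (D i) hFG
      rw [Derivation.leibniz, hDF] at this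
      simp only [smul_eq_mul, Derivation.map_one_eq_zero] at this
      linear_combination G * this - D i G * hFG
    simp only [Module.End.mul_apply, hdt, A1, A2, A, hDG, map_neg, mul_assoc, C_mul, C_neg, C_1]
    ring
  have hmC : ∀ c : K, mulX (MvPolynomial.C c) = algebraMap K _ c := by
    intro c; ext1 h
    rw [hmulX, ← MvPolynomial.algebraMap_eq, ← IsScalarTower.algebraMap_apply,
      Module.algebraMap_end_apply, Algebra.smul_def]
    rfl
  have hmB0 : ∀ r, mulX r ∈ Algebra.adjoin K {P | ∃ i : Fin n, P = xOp i ∨ P = dx i} := by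
    intro r
    induction r using MvPolynomial.induction_on with
    | C c => rw [hmC]; exact Subalgebra.algebraMap_mem _ c
    | add p q hp hq => rw [map_add]; exact add_mem hp hq
    | mul_X p i hp =>
      rw [map_mul, ← hxm]
      exact mul_mem hp (Algebra.subset_adjoin ⟨i, Or.inl rfl⟩)
  have hmono : ∀ T : Set (Module.End K S[X]), ∀ P ∈ Algebra.adjoin K {P | ∃ i : Fin n, P = xOp i ∨ P = dx i},
      P ∈ Algebra.adjoin K ({P | ∃ i : Fin n, P = xOp i ∨ P = dx i} ∪ T) :=
    fun T P hP => Algebra.adjoin_mono Set.subset_union_left hP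
  -- powers of dt applied to 1
  have hdtk : ∀ k : ℕ, ∃ p : K[X], p.Monic ∧ p.natDegree = k ∧
      (dt ^ k) 1 = C ((-G) ^ k) * p.map (algebraMap K S) := by
    intro k
    induction k with
    | zero => exact ⟨1, monic_one, by simp, by simp⟩
    | succ k ih =>
      obtain ⟨p, hp, hk, e⟩ := ih
      refine ⟨X * p.comp (X - C 1), monic_X.mul (hp.comp_X_sub_C 1), ?_, ?_⟩
      · rw [monic_X.natDegree_mul (hp.comp_X_sub_C 1), natDegree_X, natDegree_comp, natDegree_X_sub_C, hk]
        ring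
      · rw [pow_succ', Module.End.mul_apply, e, hdt, Polynomial.map_mul, Polynomial.map_comp, map_mul,
          ← Polynomial.comp_eq_aeval (p := p.map _)]
        simp only [aeval_C, Polynomial.algebraMap_eq, Polynomial.map_X, Polynomial.map_sub,
          Polynomial.map_one, map_one, pow_succ, C_mul, C_neg]
        ring
  have hσmem : ∀ p : K[X], aeval (-(dt * t)) p ∈ Algebra.adjoin K
        ({P | ∃ i : Fin n, P = xOp i ∨ P = dx i} ∪ {-(dt * t)}) := by
    intro p
    exact Algebra.adjoin_mono (Set.subset_union_right) (aeval_mem_adjoin_singleton K _)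
  have hσp : ∀ (p : K[X]) (h : S[X]), aeval (-(dt * t)) p h = p.map (algebraMap K S) * h := by
    intro p h
    induction p using Polynomial.induction_on generalizing h with
    | C a =>
      rw [aeval_C, Module.algebraMap_end_apply, Polynomial.map_C, Algebra.smul_def]; rfl
    | add p q hp hq => simp only [map_add, LinearMap.add_apply, hp, hq, Polynomial.map_add, add_mul]
    | monomial m a ih =>
      rw [pow_succ, ← mul_assoc, map_mul, aeval_X, Module.End.mul_apply, hσ, ih]
      simp only [Polynomial.map_mul, Polynomial.map_X]
      ring
  have htk : ∀ (m : ℕ) (p : K[X]) (r : S), ∃ q : K[X],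
      (t ^ m) (C r * p.map (algebraMap K S)) = C (F ^ m * r) * q.map (algebraMap K S) := by
    intro m p r
    induction m with
    | zero => exact ⟨p, by simp⟩
    | succ m ih =>
      obtain ⟨q, e⟩ := ih
      refine ⟨q.comp (X + 1), ?_⟩
      rw [pow_succ', Module.End.mul_apply, e, ht, map_mul, aeval_C, Polynomial.map_comp,
        ← Polynomial.comp_eq_aeval (p := q.map _)]
      simp only [Polynomial.algebraMap_eq, Polynomial.map_X, Polynomial.map_add,
          Polynomial.map_one, pow_succ, C_mul]
      ring
  have hb1 : (Polynomial.eval₂ mulX (-(dt * t)) b) 1 = b.map (algebraMap (MvPolynomial (Fin n) K) S) := by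
    have hσ1 : ∀ k : ℕ, ((-(dt * t)) ^ k) (1 : S[X]) = X ^ k := by
      intro k
      induction k with
      | zero => simp
      | succ k ih => rw [pow_succ', Module.End.mul_apply, ih, hσ, pow_succ']
    clear hb
    induction b using Polynomial.induction_on' with
    | add p q hp hq => rw [eval₂_add, LinearMap.add_apply, hp, hq, Polynomial.map_add]
    | monomial m a =>
      rw [eval₂_monomial, Module.End.mul_apply, hσ1, hmulX, map_monomial, C_mul_X_pow_eq_monomial]
  have hI1 : ∀ w ∈ Submodule.span K
        {w : Module.End K (Polynomial S) | ∃ P ∈ Algebra.adjoin K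
            ({P | ∃ i : Fin n, P = xOp i ∨ P = dx i} ∪ {t, dt}),
          w = P * (t - mulX f) ∨
          ∃ i : Fin n, w = P * (dx i + mulX (MvPolynomial.pderiv i f) * dt)}, w 1 = 0 := by
    intro w hw
    induction hw using Submodule.span_induction with
    | zero => rfl
    | add a b _ _ ha hb => rw [LinearMap.add_apply, ha, hb, add_zero]
    | smul c a _ ha => rw [LinearMap.smul_apply, ha, smul_zero]
    | mem w hw =>
      obtain ⟨P, -, rfl | ⟨i, rfl⟩⟩ := hw
      · rw [Module.End.mul_apply, LinearMap.sub_apply, ht, hmulX, hF, map_one, sub_self, map_zero]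
      · have := hdx i 1 0
        simp only [C_1, pow_zero, mul_one, Derivation.map_one_eq_zero, C_0, zero_add] at this
        rw [Module.End.mul_apply, LinearMap.add_apply, Module.End.mul_apply, this, hdt, hmulX,
          map_one, C_mul]
        convert map_zero P
        ring
  constructor
  · rintro ⟨Q, hQ, hQe⟩
    have hV := BS_V1 (K := K) t dt xOp dx h1 (fun i => by rw [hxm]; exact h2 _)
      (fun i => by rw [hxm]; exact h3 _) h4 h5 Q hQ
    have htm : t ∈ Algebra.adjoin K ({P | ∃ i : Fin n, P = xOp i ∨ P = dx i} ∪ {t, dt}) :=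
      Algebra.subset_adjoin (Or.inr (by simp))
    have hdtm : dt ∈ Algebra.adjoin K ({P | ∃ i : Fin n, P = xOp i ∨ P = dx i} ∪ {t, dt}) :=
      Algebra.subset_adjoin (Or.inr (by simp))
    have hσm : -(dt * t) ∈ Algebra.adjoin K ({P | ∃ i : Fin n, P = xOp i ∨ P = dx i} ∪ {t, dt}) :=
      neg_mem (mul_mem hdtm htm)
    have hQm : Q ∈ Algebra.adjoin K ({P | ∃ i : Fin n, P = xOp i ∨ P = dx i} ∪ {t, dt}) := by
      refine Algebra.adjoin_le ?_ hQ
      rintro P (hP | hP)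
      · exact Algebra.subset_adjoin (Or.inl hP)
      · rw [Set.mem_singleton_iff.1 hP]; exact hσm
    have hbm : Polynomial.eval₂ mulX (-(dt * t)) b ∈
        Algebra.adjoin K ({P | ∃ i : Fin n, P = xOp i ∨ P = dx i} ∪ {t, dt}) := by
      rw [eval₂_eq_sum, Polynomial.sum]
      exact sum_mem fun k _ => mul_mem (hmono _ _ (hmB0 _)) (pow_mem hσm k)
    have hN := BS_normal (K := K) mulX (fun i r => MvPolynomial.pderiv i r) f t dt xOp dx
      MvPolynomial.X hxm h1 h2 h3 (fun i => (h5 i).symm) h6 (fun r => hmono _ _ (hmB0 r))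
      (Polynomial.eval₂ mulX (-(dt * t)) b - Q * t) (sub_mem hbm (mul_mem hQm htm))
    obtain ⟨u, hu, v, hv, huv⟩ := Submodule.mem_sup.1 hN
    have hv1 : v 1 = 0 := by
      have := congrArg (fun w : Module.End K S[X] => w 1) huv
      simp only [LinearMap.add_apply, LinearMap.sub_apply, hI1 u hu, hb1, Module.End.mul_apply, ht,
        map_one, mul_one, hQe, zero_add, sub_self] at this
      exact this
    have hvc : ∃ c : Polynomial (MvPolynomial (Fin n) K), v = eval₂ mulX dt c := by
      clear hv1 huv
      induction hv using Submodule.span_induction with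
      | zero => exact ⟨0, by simp⟩
      | add a b _ _ ha hb =>
        obtain ⟨p, rfl⟩ := ha
        obtain ⟨q, rfl⟩ := hb
        exact ⟨p + q, by rw [eval₂_add]⟩
      | smul c a _ ha =>
        obtain ⟨p, rfl⟩ := ha
        refine ⟨C (MvPolynomial.C c) * p, ?_⟩
        rw [eval₂_mul_noncomm _ _ (fun k => (h3 _).symm), eval₂_C, hmC, Algebra.smul_def]
      | mem w hw =>
        obtain ⟨g, k, rfl⟩ := hw
        exact ⟨monomial k g, by rw [eval₂_monomial]⟩
    obtain ⟨c, hc⟩ := hvc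
    have hc0 : c = 0 := by
      rw [← leadingCoeff_eq_zero]
      apply hinj
      rw [map_zero]
      have e : (v 1).coeff c.natDegree = algebraMap _ S c.leadingCoeff * (-G) ^ c.natDegree := by
        rw [hc, eval₂_eq_sum_range, LinearMap.sum_apply, finsetSum_coeff, Finset.sum_range_succ,
          Finset.sum_eq_zero, zero_add]
        · obtain ⟨p, hp, hk, e⟩ := hdtk c.natDegree
          rw [Module.End.mul_apply, e, hmulX, coeff_C_mul, coeff_C_mul, coeff_map]
          have : p.coeff c.natDegree = 1 := by rw [← hk]; exact hp
          rw [this, map_one, mul_one]; rfl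
        · intro k hk'
          obtain ⟨p, hp, hk, e⟩ := hdtk k
          rw [Module.End.mul_apply, e, hmulX, coeff_C_mul, coeff_C_mul, coeff_map,
            coeff_eq_zero_of_natDegree_lt (p := p) (hk.trans_lt (Finset.mem_range.1 hk'))]
          simp
      rw [hv1, coeff_zero] at e
      have hu : (-G) ^ c.natDegree * (-F) ^ c.natDegree = 1 := by
        rw [← mul_pow, neg_mul_neg, mul_comm, hFG, one_pow]
      rw [← mul_one (algebraMap _ S c.leadingCoeff), ← hu, ← mul_assoc, ← e, zero_mul]
    rw [hc, hc0, eval₂_zero, add_zero] at huv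
    rw [Submodule.add_eq_sup]
    exact Submodule.mem_sup.2 ⟨u, hu, Q * t, hV, by rw [huv, sub_add_cancel]⟩
  · intro h
    rw [Submodule.add_eq_sup] at h
    obtain ⟨u, hu, v, hv, huv⟩ := Submodule.mem_sup.1 h
    have hv1 : v 1 = b.map (algebraMap (MvPolynomial (Fin n) K) S) := by
      rw [← hb1, ← huv, LinearMap.add_apply, hI1 u hu, zero_add]
    rw [← hv1]
    clear hv1 huv
    induction hv using Submodule.span_induction with
    | zero => exact ⟨0, zero_mem _, rfl⟩
    | add a b _ _ ha hb =>
      obtain ⟨p, hp, ep⟩ := ha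
      obtain ⟨q, hq, eq⟩ := hb
      exact ⟨p + q, add_mem hp hq, by rw [LinearMap.add_apply, ep, eq]; rfl⟩
    | smul c a _ ha =>
      obtain ⟨p, hp, ep⟩ := ha
      exact ⟨c • p, Subalgebra.smul_mem _ hp c, by rw [LinearMap.smul_apply, ep]; rfl⟩
    | mem w hw =>
      obtain ⟨P, hP, μ, ν, hμ, rfl⟩ := hw
      obtain ⟨d, rfl⟩ : ∃ d, μ = ν + d + 1 := ⟨μ - ν - 1, by omega⟩
      obtain ⟨p, -, -, ep⟩ := hdtk ν
      obtain ⟨q, eq⟩ := htk (ν + d + 1) p ((-G) ^ ν)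
      refine ⟨P * (mulX ((-1) ^ ν * f ^ d) * aeval (-(dt * t)) q),
        mul_mem (hmono _ _ hP) (mul_mem (hmono _ _ (hmB0 _)) (hσmem q)), ?_⟩
      simp only [Module.End.mul_apply]
      rw [ep, eq, hσp, hmulX]
      congr 1
      have : F ^ (ν + d + 1) * (-G) ^ ν = (-1) ^ ν * F ^ d * F := by
        have h1 : (F * G) ^ ν = 1 := by rw [hFG, one_pow]
        rw [neg_pow]
        rw [mul_pow] at h1
        linear_combination ((-1) ^ ν * F ^ d * F) * h1
      rw [this]
      simp only [map_mul, map_pow, map_neg, map_one, hF]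
      ring
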